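/- Let q be even, let d ≥ 4 be a power of 2, and let n = d²−1. Let a ∈ F_{q^n} with N_{q^n/q}(a) = 1 and set b = (∏_{i=1}^{d−1} a^{q^{id}})^{−1}. Then the polynomial x^{q^d} − b·x^q − a·x divides x^{q^n} − x in F_{q^n}[x]; in particular, it is a quasi-subfield polynomial (it splits completely over F_{q^n} and log_q of the degree of b·x^q + a·x equals 1 < d²/n). -/

import Mathlib

/-!
Let `q = #K`, `p = char K` and `d = p ^ m`. In `K[T]` put `f = T ^ d + T - 1`; additivity of the
`d`-th power gives `f ^ d - f = T * (T ^ (d ^ 2 - 1) - 1)`, and `f` is prime to `T`, so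
`f ∣ T ^ (d ^ 2 - 1) - 1`. Letting `T` act as the `q`-Frobenius turns this into
`x ^ q ^ d + x ^ q - x ∣ x ^ q ^ (d ^ 2 - 1) - x` for every element `x` of a commutative
`K`-algebra. Since `d` is prime to `n = d ^ 2 - 1`, an `a` of norm one in the extension `L` of
degree `n` is `y / y ^ q ^ d` for some `y ≠ 0`. The substitution `x = y * X` in `L[X]` then yields
`X ^ q ^ d - b * X ^ q - a * X` up to a unit, where `b = -y ^ q / y ^ q ^ d` because the product
telescopes. The sign of `b` disappears in characteristic two.
-/

open Polynomial

theorem X_pow_add_X_sub_one_dvd_X_pow_sub_one (R : Type*) [CommRing R] (p m : ℕ) [ExpChar R p] :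
    (X ^ p ^ m + X - 1 : R[X]) ∣ X ^ ((p ^ m) ^ 2 - 1) - 1 := by
  set d := p ^ m
  have hd_pos : 0 < d := pow_pos (expChar_pos R p) m
  have coprime : IsCoprime (X ^ d + X - 1 : R[X]) X := by
    refine ⟨-1, X ^ (d - 1) + 1, ?_⟩
    linear_combination pow_sub_one_mul hd_pos.ne' (X : R[X])
  refine coprime.dvd_of_dvd_mul_left ?_
  have frobenius_expansion : (X ^ d + X - 1 : R[X]) ^ d = X ^ d ^ 2 + X ^ d - 1 := by
    rw [sub_pow_expChar_pow, add_pow_expChar_pow, one_pow, ← pow_mul, sq]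
  have factorization :
      (X * (X ^ (d ^ 2 - 1) - 1) : R[X]) = (X ^ d + X - 1) ^ d - (X ^ d + X - 1) := by
    linear_combination mul_pow_sub_one (pow_pos hd_pos 2).ne' (X : R[X]) - frobenius_expansion
  rw [factorization]
  exact dvd_sub (dvd_pow_self _ hd_pos.ne') dvd_rfl

section Frobenius

variable (K : Type*) [Field K] [Fintype K] {A : Type*} [CommRing A] [Algebra K A]

theorem frobeniusAlgHom_toLinearMap_pow_apply (k : ℕ) (x : A) :
    ((FiniteField.frobeniusAlgHom K A).toLinearMap ^ k) x = x ^ Fintype.card K ^ k := by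
  rw [Module.End.pow_apply, AlgHom.coe_toLinearMap, FiniteField.coe_frobeniusAlgHom, pow_iterate]

theorem dvd_aeval_frobeniusAlgHom_apply (f : K[X]) (x : A) :
    x ∣ aeval (FiniteField.frobeniusAlgHom K A).toLinearMap f x := by
  induction f using Polynomial.induction_on' with
  | add f g hf hg => simpa only [map_add, LinearMap.add_apply] using dvd_add hf hg
  | monomial k c =>
    rw [aeval_monomial, ← Algebra.smul_def, LinearMap.smul_apply,
      frobeniusAlgHom_toLinearMap_pow_apply]
    exact dvd_smul_of_dvd c (dvd_pow_self x (pow_pos Fintype.card_pos k).ne')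

theorem aeval_frobeniusAlgHom_apply_dvd {f g : K[X]} (hfg : f ∣ g) (x : A) :
    aeval (FiniteField.frobeniusAlgHom K A).toLinearMap f x ∣
      aeval (FiniteField.frobeniusAlgHom K A).toLinearMap g x := by
  obtain ⟨h, rfl⟩ := hfg
  rw [mul_comm, map_mul, Module.End.mul_apply]
  exact dvd_aeval_frobeniusAlgHom_apply K h _

theorem pow_card_pow_add_pow_card_sub_dvd (p m : ℕ) [ExpChar K p] (x : A) :
    x ^ Fintype.card K ^ p ^ m + x ^ Fintype.card K - x ∣
      x ^ Fintype.card K ^ ((p ^ m) ^ 2 - 1) - x := by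
  simpa [frobeniusAlgHom_toLinearMap_pow_apply, FiniteField.coe_frobeniusAlgHom] using
    aeval_frobeniusAlgHom_apply_dvd K (X_pow_add_X_sub_one_dvd_X_pow_sub_one K p m) x

end Frobenius

theorem prod_Icc_div_pow_pow {G : Type*} [CommGroupWithZero G] {y : G} (hy : y ≠ 0) (r k : ℕ) :
    ∏ i ∈ Finset.Icc 1 k, (y / y ^ r) ^ r ^ i = y ^ r / y ^ r ^ (k + 1) := by
  induction k with
  | zero => simp [hy]
  | succ k ih =>
    rw [Finset.prod_Icc_succ_top (by omega), ih, div_pow, ← pow_mul, ← pow_succ',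
      div_mul_div_cancel₀ (pow_ne_zero _ hy)]

theorem range_powMonoidHom_eq_ker (G : Type*) [CommGroup G] [IsCyclic G] [Finite G] (k : ℕ) :
    (powMonoidHom k : G →* G).range =
      (powMonoidHom (Nat.card G / (Nat.card G).gcd k) : G →* G).ker := by
  refine Subgroup.eq_of_le_of_card_ge ?_ ?_
  · rintro _ ⟨x, rfl⟩
    have card_dvd : Nat.card G ∣ k * (Nat.card G / (Nat.card G).gcd k) := by
      rw [← Nat.mul_div_assoc _ (Nat.gcd_dvd_left ..), mul_comm,
        Nat.mul_div_assoc _ (Nat.gcd_dvd_right ..)]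
      exact dvd_mul_right ..
    rw [MonoidHom.mem_ker, powMonoidHom_apply, powMonoidHom_apply, ← pow_mul]
    exact orderOf_dvd_iff_pow_eq_one.mp ((orderOf_dvd_natCard x).trans card_dvd)
  · rw [IsCyclic.card_powMonoidHom_ker, IsCyclic.card_powMonoidHom_range]
    exact Nat.gcd_le_right _ (Nat.div_pos (Nat.gcd_le_left _ Nat.card_pos)
      (Nat.gcd_pos_of_pos_left _ Nat.card_pos))

section Scaling

variable {L : Type*} [Field L] [Fintype L]

theorem exists_div_pow_eq_of_pow_eq_one {q n k : ℕ} (hcard : Fintype.card L = q ^ n)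
    (hnk : n.Coprime k) {a : L} (ha : a ^ ((q ^ n - 1) / (q - 1)) = 1) :
    ∃ y : L, y ≠ 0 ∧ y / y ^ q ^ k = a := by
  have one_lt_card : 1 < q ^ n := hcard ▸ Fintype.one_lt_card
  have hn : n ≠ 0 := by rintro rfl; simp at one_lt_card
  have hq : 1 < q := (Nat.one_lt_pow_iff hn).mp one_lt_card
  have exponent_ne_zero : (q ^ n - 1) / (q - 1) ≠ 0 :=
    Nat.div_ne_zero_iff.mpr ⟨by omega, Nat.sub_le_sub_right (Nat.le_self_pow hn q) 1⟩
  lift a to Lˣ using (IsUnit.of_pow_eq_one ha exponent_ne_zero)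
  have card_units : Nat.card Lˣ = q ^ n - 1 := by
    rw [Nat.card_units, Nat.card_eq_fintype_card, hcard]
  have gcd_eq : (Nat.card Lˣ).gcd (q ^ k - 1) = q - 1 := by
    rw [card_units, Nat.pow_sub_one_gcd_pow_sub_one, hnk.gcd_eq_one, pow_one]
  have a_mem_range : a ∈ (powMonoidHom (q ^ k - 1) : Lˣ →* Lˣ).range := by
    rw [range_powMonoidHom_eq_ker, gcd_eq, card_units, MonoidHom.mem_ker, powMonoidHom_apply]
    ext
    simpa only [Units.val_pow_eq_pow_val, Units.val_one] using ha
  obtain ⟨z, rfl⟩ := a_mem_range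
  refine ⟨(z⁻¹ : Lˣ), Units.ne_zero _, ?_⟩
  norm_cast
  rw [inv_pow, div_inv_eq_mul, inv_mul_eq_iff_eq_mul, powMonoidHom_apply,
    mul_pow_sub_one (pow_pos (zero_lt_one.trans hq) k).ne']

theorem inv_prod_Icc_div_pow_pow {q d : ℕ} (hd : 0 < d)
    (hcard : Fintype.card L = q ^ (d ^ 2 - 1)) {y : L} (hy : y ≠ 0) :
    (∏ i ∈ Finset.Icc 1 (d - 1), (y / y ^ q ^ d) ^ q ^ (i * d))⁻¹ = y ^ q / y ^ q ^ d := by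
  have pow_top : y ^ (q ^ d) ^ d = y ^ q := by
    rw [← pow_mul, ← sq, ← pow_sub_one_mul (pow_pos hd 2).ne' q, ← hcard, pow_mul,
      FiniteField.pow_card]
  simp only [mul_comm _ d, pow_mul]
  rw [prod_Icc_div_pow_pow hy, Nat.sub_add_cancel hd, pow_top, inv_div]

theorem X_pow_add_C_mul_X_pow_sub_C_mul_X_dvd (K : Type*) [Field K] [Fintype K] [Algebra K L]
    {q : ℕ} (p m : ℕ) [ExpChar K p] (hcardK : Fintype.card K = q)
    (hcardL : Fintype.card L = q ^ ((p ^ m) ^ 2 - 1)) {y : L} (hy : y ≠ 0) :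
    (X ^ q ^ p ^ m + C (y ^ q / y ^ q ^ p ^ m) * X ^ q - C (y / y ^ q ^ p ^ m) * X : L[X]) ∣
      X ^ Fintype.card L - X := by
  set r := q ^ p ^ m
  have hyr : y ^ r ≠ 0 := pow_ne_zero _ hy
  have scaled_divisor : (C y * X) ^ r + (C y * X) ^ q - C y * X =
      C (y ^ r) * (X ^ r + C (y ^ q / y ^ r) * X ^ q - C (y / y ^ r) * X) := by
    rw [mul_sub, mul_add, ← mul_assoc, ← mul_assoc, ← C_mul, ← C_mul, mul_div_cancel₀ _ hyr,
      mul_div_cancel₀ _ hyr, mul_pow, mul_pow, ← C_pow, ← C_pow]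
  have scaled_multiple :
      (C y * X) ^ Fintype.card L - C y * X = C y * (X ^ Fintype.card L - X) := by
    rw [mul_pow, ← C_pow, FiniteField.pow_card, mul_sub]
  have scaled_dvd := pow_card_pow_add_pow_card_sub_dvd K p m (C y * X : L[X])
  rw [hcardK, ← hcardL, scaled_divisor, scaled_multiple] at scaled_dvd
  exact ((isUnit_C.mpr hy.isUnit).dvd_mul_left).mp (dvd_of_mul_left_dvd scaled_dvd)

end Scaling

theorem stmt_17_general (K L : Type*) [Field K] [Field L] [Fintype K] [Fintype L] [Algebra K L]
    (p q d n : ℕ) [ExpChar K p] (hcardK : Fintype.card K = q) (hd : ∃ m : ℕ, d = p ^ m)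
    (hn : n = d ^ 2 - 1) (hcardL : Fintype.card L = q ^ n)
    (a b : L) (ha : a ^ ((q ^ n - 1) / (q - 1)) = 1)
    (hb : b = -(∏ i ∈ Finset.Icc 1 (d - 1), a ^ q ^ (i * d))⁻¹) :
    ((X : L[X]) ^ q ^ d - C b * X ^ q - C a * X) ∣ ((X : L[X]) ^ q ^ n - X)
      ∧ Polynomial.Splits (((X : L[X]) ^ q ^ d - C b * X ^ q - C a * X).map (RingHom.id L))
      ∧ n < d ^ 2 := by
  obtain ⟨m, rfl⟩ := hd
  subst hn
  set d := p ^ m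
  have hd_pos : 0 < d := pow_pos (expChar_pos K p) m
  have coprime : (d ^ 2 - 1).Coprime d :=
    Nat.Coprime.coprime_dvd_right (dvd_pow_self d two_ne_zero)
      ((Nat.coprime_self_sub_left (pow_pos hd_pos 2)).mpr (Nat.coprime_one_left _))
  obtain ⟨y, hy, rfl⟩ := exists_div_pow_eq_of_pow_eq_one hcardL coprime ha
  have dvd := X_pow_add_C_mul_X_pow_sub_C_mul_X_dvd K p m hcardK hcardL hy
  rw [← inv_prod_Icc_div_pow_pow hd_pos hcardL hy, ← neg_neg (_⁻¹), ← hb, C_neg, neg_mul,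
    ← sub_eq_add_neg] at dvd
  refine ⟨hcardL ▸ dvd, ?_, Nat.sub_one_lt (pow_pos hd_pos 2).ne'⟩
  rw [Polynomial.map_id]
  refine Splits.of_dvd ?_ (FiniteField.X_pow_card_sub_X_ne_zero L Fintype.one_lt_card) dvd
  exact Fintype.card_eq_nat_card (α := L) ▸ splits_X_pow_nat_card_sub_X

open Polynomial in
/-- (Proposition `quasisubfield`.) Let `q` be even, `d ≥ 4` a power of
`2`, `n = d² - 1`. If `a ∈ F_{q^n}` has `N_{q^n/q}(a) = 1` and
`b = (∏_{i=1}^{d-1} a^{q^{id}})⁻¹`, then `x^{q^d} − b·x^q − a·x` divides `x^{q^n} − x` in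
`F_{q^n}[x]`; in particular it splits completely over `F_{q^n}` and
`log_q(deg(b·x^q + a·x)) = 1 < d²/n` (i.e. `n < d²`), so it is a quasi-subfield
polynomial. -/
theorem stmt_17 (p q : ℕ) (hp : p.Prime) (hq : ∃ m : ℕ, 0 < m ∧ q = p ^ m)
    (hqeven : Even q)
    (K L : Type*) [Field K] [Field L] [Fintype K] [Fintype L] [Algebra K L]
    (hcardK : Fintype.card K = q)
    (d : ℕ) (hd : 4 ≤ d) (hd2 : ∃ m : ℕ, d = 2 ^ m)
    (n : ℕ) (hnval : n = d ^ 2 - 1) (hcardL : Fintype.card L = q ^ n)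
    (a b : L) (ha : a ^ ((q ^ n - 1) / (q - 1)) = 1)
    (hb : b = (∏ i ∈ Finset.Icc 1 (d - 1), a ^ q ^ (i * d))⁻¹) :
    ((X : L[X]) ^ q ^ d - C b * X ^ q - C a * X) ∣ ((X : L[X]) ^ q ^ n - X)
      ∧ Polynomial.Splits (((X : L[X]) ^ q ^ d - C b * X ^ q - C a * X).map (RingHom.id L))
      ∧ n < d ^ 2 := by
  obtain ⟨m, -, rfl⟩ := hq
  obtain rfl : p = 2 := hp.even_iff.mp (Nat.even_pow.mp hqeven).1
  have : CharP K 2 := charP_of_card_eq_prime_pow hcardK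
  have : CharP L 2 := charP_of_injective_algebraMap (algebraMap K L).injective 2
  rw [← CharTwo.neg_eq (_⁻¹)] at hb
  exact stmt_17_general K L 2 _ d n hcardK hd2 hnval hcardL a b ha hb
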